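/- arXiv:1504.04954 — 2 statements merged into one kernel-verified Lean document; each statement's English description precedes it below -/
import Mathlib

section
/- Let b₁ < 0 < b₂, B = diag(b₁,b₂), and Q(x) = [[0,Q₁₂(x)],[Q₂₁(x),0]] with Q₁₂, Q₂₁ ∈ L¹[0,1]. Let Φ(·,λ) be the fundamental matrix solution with Φ(0,λ) = I₂, and for boundary conditions U_j(y) = a_{j1} y₁(0) + a_{j2} y₂(0) + a_{j3} y₁(1) + a_{j4} y₂(1), j = 1,2, define the characteristic determinant Δ(λ) = det (U_j(Φ_k(·,λ)))_{j,k=1}², and Δ₀(λ) = J₁₂ + J₃₄ e^{i(b₁+b₂)λ} + J₃₂ e^{i b₁ λ} + J₁₄ e^{i b₂ λ}, where J_{jk} is the determinant of the 2×2 matrix formed by columns j and k of the coefficient matrix (a_{jm}). Then there exist g₁, g₂ ∈ L¹[0,1] such that for every λ ∈ ℂ: Δ(λ) = Δ₀(λ) + ∫₀¹ g₁(t) e^{i b₁ λ t} dt + ∫₀¹ g₂(t) e^{i b₂ λ t} dt. -/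
/-!
Writing `φ_{jk} = Φ_{jk}(1,λ)` and using `Φ(0,λ) = I`, the characteristic determinant expands as
`J₁₂ + J₁₃ φ₁₂ + J₁₄ φ₂₂ + J₃₂ φ₁₁ + J₄₂ φ₂₁ + J₃₄ det Φ(1,λ)`. Since `Q` is off-diagonal,
Liouville's formula (`det_fundSol`) gives `det Φ(1,λ) = e^{i(b₁+b₂)λ}`, so the only products of
entries contribute an explicit exponential. It remains to show that each
`φ_{jk} - δ_{jk} e^{i b_k λ}` is the Fourier–Laplace transform `∫ G(s) e^{iλs} ds` of an `L¹`
density `G` on `[b₁,b₂]` independent of `λ` (`hasDens_fundSol`); cutting `[b₁,b₂]` at `0` and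
rescaling the halves yields `g₁` and `g₂` (`HasDens.split`).

By variation of constants (`IsPrim.duhamel`), a column `y` of `Φ` solves
`y_j(x) = δ_{jk} e^{i b_k λ x} + ∫₀ˣ e^{i b_j λ (x-t)} q_j(t) y_{1-j}(t) dt`, where `q = -i B Q` in
the off-diagonal places. On the Fourier side this Volterra operator multiplies by `q_j(t)`,
translates by `b_j (x-t)` and integrates in `t`; it maps densities supported in `[b₁x, b₂x]` to
densities supported there (`DensRep.step`). The unperturbed exponential is the transform of a
Dirac mass, but its first iterate already has an `L¹` density, by the substitution
`s = b_j (x-t) + b_k t`, which is legitimate as `b_j ≠ b_k` (`densRep_first`). With respect to the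
weight `e^{Kx}`, where `K` is so large that `∫₀ˣ |q(t)| e^{-K(x-t)} dt ≤ 1/2` for all `x`
(`exists_weight`), the operator has norm at most `1/2`, both on densities and, with `K` increased by
a multiple of `|λ|`, on continuous functions. Hence the Neumann series converges to `y`, and the
series of its densities converges in `L¹` (`column_rep`).
-/

open MeasureTheory Set Complex Filter ComplexConjugate
open scoped ENNReal NNReal

noncomputable section

/-- Lebesgue measure restricted to `[0,1]`. -/
def μ01 : Measure ℝ := volume.restrict (Set.Icc (0:ℝ) 1)

/-- `y` is a `W^{1,1}` solution on `[0,1]` of the Dirac type system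
`-i B⁻¹ y' + Q(x) y = λ y`, with `B = diag(b₁,b₂)` and `Q = [[0,Q₁₂],[Q₂₁,0]]`. -/
def IsSol (b₁ b₂ : ℝ) (Q₁₂ Q₂₁ : ℝ → ℂ) (l : ℂ) (y : ℝ → Fin 2 → ℂ) : Prop :=
  ∃ g : ℝ → Fin 2 → ℂ,
    (∀ i, IntegrableOn (fun t => g t i) (Set.Icc (0:ℝ) 1)) ∧
    (∀ x ∈ Set.Icc (0:ℝ) 1, ∀ i, y x i = y 0 i + ∫ t in (0:ℝ)..x, g t i) ∧
    (∀ᵐ x ∂μ01,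
      -Complex.I * ((b₁:ℂ))⁻¹ * g x 0 + Q₁₂ x * y x 1 = l * y x 0 ∧
      -Complex.I * ((b₂:ℂ))⁻¹ * g x 1 + Q₂₁ x * y x 0 = l * y x 1)

/-- `Φ` is the fundamental matrix solution of `-i B⁻¹ Y' + Q Y = λ Y`, `Φ(0,λ) = I₂`;
`Φ l x j k` is the entry `φ_{jk}(x,λ)` and the `k`-th column solves the system. -/
def IsFundSol (b₁ b₂ : ℝ) (Q₁₂ Q₂₁ : ℝ → ℂ) (Φ : ℂ → ℝ → Fin 2 → Fin 2 → ℂ) : Prop :=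
  ∀ l : ℂ, (∀ j k : Fin 2, Φ l 0 j k = if j = k then 1 else 0) ∧
    ∀ k : Fin 2, IsSol b₁ b₂ Q₁₂ Q₂₁ l (fun x j => Φ l x j k)

/-- `J_{jk}`: the determinant of the `2×2` matrix formed by columns `j` and `k`
(0-indexed) of the `2×4` coefficient matrix `aM`. -/
def Jdet (aM : Fin 2 → Fin 4 → ℂ) (j k : Fin 4) : ℂ :=
  aM 0 j * aM 1 k - aM 0 k * aM 1 j

/-- The boundary form `U_j(y) = a_{j1} y₁(0) + a_{j2} y₂(0) + a_{j3} y₁(1) + a_{j4} y₂(1)`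
expressed through the boundary values `y0 = y(0)` and `y1 = y(1)`. -/
def bform (aM : Fin 2 → Fin 4 → ℂ) (j : Fin 2) (y0 y1 : Fin 2 → ℂ) : ℂ :=
  aM j 0 * y0 0 + aM j 1 * y0 1 + aM j 2 * y1 0 + aM j 3 * y1 1

/-- The characteristic determinant `Δ(λ) = det (U_j(Φ_k(·,λ)))_{j,k}`. -/
def charDet (aM : Fin 2 → Fin 4 → ℂ) (Φ : ℂ → ℝ → Fin 2 → Fin 2 → ℂ) (l : ℂ) : ℂ :=
  bform aM 0 (fun i => Φ l 0 i 0) (fun i => Φ l 1 i 0) *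
    bform aM 1 (fun i => Φ l 0 i 1) (fun i => Φ l 1 i 1) -
  bform aM 0 (fun i => Φ l 0 i 1) (fun i => Φ l 1 i 1) *
    bform aM 1 (fun i => Φ l 0 i 0) (fun i => Φ l 1 i 0)

/-- `Δ₀(λ) = J₁₂ + J₃₄ e^{i(b₁+b₂)λ} + J₃₂ e^{i b₁ λ} + J₁₄ e^{i b₂ λ}`, the characteristic
determinant of the unperturbed (`Q = 0`) problem. -/
def Delta0 (b₁ b₂ : ℝ) (aM : Fin 2 → Fin 4 → ℂ) (l : ℂ) : ℂ :=
  Jdet aM 0 1 + Jdet aM 2 3 * Complex.exp (Complex.I * ((b₁:ℂ) + (b₂:ℂ)) * l) +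
    Jdet aM 2 1 * Complex.exp (Complex.I * (b₁:ℂ) * l) +
    Jdet aM 0 3 * Complex.exp (Complex.I * (b₂:ℂ) * l)

/-! ### Absolutely continuous functions on the unit interval -/

/-- `y` is absolutely continuous on `[0,1]` with derivative `g ∈ L¹[0,1]`, expressed as `y` being
a primitive of `g`. -/
def IsPrim (y g : ℝ → ℂ) : Prop :=
  IntegrableOn g (Icc (0:ℝ) 1) ∧ ∀ x ∈ Icc (0:ℝ) 1, y x = y 0 + ∫ t in (0:ℝ)..x, g t

lemma intervalIntegrable_of_Icc {g : ℝ → ℂ} (hg : IntegrableOn g (Icc (0:ℝ) 1)) :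
    IntervalIntegrable g volume 0 1 :=
  (intervalIntegrable_iff_integrableOn_Icc_of_le zero_le_one).2 hg

/-- The Mathlib statement is for real-valued functions; the complex case follows by splitting into
real and imaginary parts. -/
lemma absolutelyContinuous_primitive {g : ℝ → ℂ} (hg : IntervalIntegrable g volume 0 1) :
    AbsolutelyContinuousOnInterval (fun x => ∫ t in (0:ℝ)..x, g t) 0 1 := by
  have hre : IntervalIntegrable (fun t => (g t).re) volume 0 1 := ⟨hg.1.re, hg.2.re⟩
  have him : IntervalIntegrable (fun t => (g t).im) volume 0 1 := ⟨hg.1.im, hg.2.im⟩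
  have h0 : (0:ℝ) ∈ uIcc (0:ℝ) 1 := by simp
  have c1 : AbsolutelyContinuousOnInterval (fun _ : ℝ => (1:ℂ)) 0 1 :=
    (contDiff_const.contDiffOn (n := 1)).absolutelyContinuousOnInterval
  have cI : AbsolutelyContinuousOnInterval (fun _ : ℝ => Complex.I) 0 1 :=
    (contDiff_const.contDiffOn (n := 1)).absolutelyContinuousOnInterval
  have h1 := (hre.absolutelyContinuousOnInterval_intervalIntegral h0).smul c1
  have h2 := (him.absolutelyContinuousOnInterval_intervalIntegral h0).smul cI
  have h3 := h1.add h2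
  rw [absolutelyContinuousOnInterval_iff] at h3 ⊢
  intro ε hε
  obtain ⟨δ, hδ, h⟩ := h3 ε hε
  refine ⟨δ, hδ, fun E hE hlt => ?_⟩
  have key : ∀ x ∈ uIcc (0:ℝ) 1, (∫ t in (0:ℝ)..x, g t) =
      ((fun x => ∫ t in (0:ℝ)..x, (g t).re) • (fun _ : ℝ => (1:ℂ)) +
      (fun x => ∫ t in (0:ℝ)..x, (g t).im) • (fun _ : ℝ => Complex.I)) x := by
    intro x hx
    have hgx : IntervalIntegrable g volume 0 x :=
      hg.mono_set (uIcc_subset_uIcc h0 hx)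
    have e1 : (∫ t in (0:ℝ)..x, (g t).re) = (∫ t in (0:ℝ)..x, g t).re := by
      simpa using Complex.reCLM.intervalIntegral_comp_comm hgx
    have e2 : (∫ t in (0:ℝ)..x, (g t).im) = (∫ t in (0:ℝ)..x, g t).im := by
      simpa using Complex.imCLM.intervalIntegral_comp_comm hgx
    simp only [Pi.add_apply, Pi.smul_apply', e1, e2]
    apply Complex.ext <;> simp
  refine lt_of_eq_of_lt (Finset.sum_congr rfl fun i hi => ?_) (h E hE hlt)
  have := hE.1 i (by simpa using hi)
  rw [key _ this.1, key _ this.2]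

lemma IsPrim.continuousOn {y g : ℝ → ℂ} (h : IsPrim y g) : ContinuousOn y (Icc (0:ℝ) 1) := by
  have h1 := (absolutelyContinuous_primitive (intervalIntegrable_of_Icc h.1)).continuousOn
  rw [uIcc_of_le zero_le_one] at h1
  exact (continuousOn_const.add h1).congr h.2

lemma IsPrim.integrableOn_mul {y g h : ℝ → ℂ} (hy : IsPrim y g)
    (hh : IntegrableOn h (Icc (0:ℝ) 1)) :
    IntegrableOn (fun t => h t * y t) (Icc (0:ℝ) 1) :=
  hh.mul_continuousOn hy.continuousOn isCompact_Icc

lemma IsPrim.congr_ae {y g h : ℝ → ℂ} (hy : IsPrim y g)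
    (hgh : ∀ᵐ x ∂(volume.restrict (Icc (0:ℝ) 1)), g x = h x) : IsPrim y h := by
  refine ⟨hy.1.congr hgh, fun x hx => ?_⟩
  rw [hy.2 x hx, intervalIntegral.integral_of_le hx.1, intervalIntegral.integral_of_le hx.1]
  congr 1
  refine integral_congr_ae (ae_mono (Measure.restrict_mono ?_ le_rfl) hgh)
  exact fun t ht => ⟨ht.1.le, ht.2.trans hx.2⟩

/-- The product rule for absolutely continuous functions. -/
lemma IsPrim.mul {y z g h : ℝ → ℂ} (hy : IsPrim y g) (hz : IsPrim z h) :
    IsPrim (fun x => y x * z x) (fun x => g x * z x + h x * y x) := by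
  have hinteg : IntegrableOn (fun x => g x * z x + h x * y x) (Icc (0:ℝ) 1) :=
    (hz.integrableOn_mul hy.1).add (hy.integrableOn_mul hz.1)
  refine ⟨hinteg, ?_⟩
  have gi := intervalIntegrable_of_Icc hy.1
  have hi := intervalIntegrable_of_Icc hz.1
  have pi := intervalIntegrable_of_Icc hinteg
  set Y : ℝ → ℂ := fun x => y 0 + ∫ t in (0:ℝ)..x, g t with hY
  set Z : ℝ → ℂ := fun x => z 0 + ∫ t in (0:ℝ)..x, h t with hZ
  have ac_const : ∀ c : ℂ, AbsolutelyContinuousOnInterval (fun _ : ℝ => c) 0 1 := fun c =>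
    (contDiff_const.contDiffOn (n := 1)).absolutelyContinuousOnInterval
  have aY : AbsolutelyContinuousOnInterval Y 0 1 :=
    (ac_const _).add (absolutelyContinuous_primitive gi)
  have aZ : AbsolutelyContinuousOnInterval Z 0 1 :=
    (ac_const _).add (absolutelyContinuous_primitive hi)
  have aH : AbsolutelyContinuousOnInterval
      (fun x => Y x * Z x - ∫ t in (0:ℝ)..x, (g t * z t + h t * y t)) 0 1 :=
    (aY.smul aZ).sub (absolutelyContinuous_primitive pi)
  have h0 : (0:ℝ) ∈ uIcc (0:ℝ) 1 := by simp
  obtain ⟨C, hC⟩ := aH.const_of_ae_hasDerivAt_zero (by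
    filter_upwards [gi.ae_hasDerivAt_integral, hi.ae_hasDerivAt_integral,
      pi.ae_hasDerivAt_integral] with x h1 h2 h3 hx
    have d1 := ((h1 hx 0 h0).const_add (y 0)).mul ((h2 hx 0 h0).const_add (z 0))
    have d2 : HasDerivAt (fun x => Y x * Z x - ∫ t in (0:ℝ)..x, (g t * z t + h t * y t))
      (g x * Z x + Y x * h x - (g x * z x + h x * y x)) x := d1.sub (h3 hx 0 h0)
    rw [uIcc_of_le zero_le_one] at hx
    have e : g x * Z x + Y x * h x - (g x * z x + h x * y x) = 0 := by
      rw [show Y x = y x from (hy.2 x hx).symm, show Z x = z x from (hz.2 x hx).symm]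
      ring
    rwa [e] at d2)
  intro x hx
  have e0 := hC 0 h0
  have ex := hC x (by rwa [uIcc_of_le zero_le_one])
  rw [← e0] at ex
  simp only [hY, hZ, intervalIntegral.integral_same, add_zero, sub_zero] at ex
  rw [← hy.2 x hx, ← hz.2 x hx] at ex
  simp only [← ex]
  ring

lemma isPrim_exp (c : ℂ) :
    IsPrim (fun x => Complex.exp (c * x)) (fun x => c * Complex.exp (c * x)) := by
  have hc : Continuous (fun x : ℝ => c * Complex.exp (c * x)) := by fun_prop
  refine ⟨hc.integrableOn_Icc, fun x _ => ?_⟩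
  have hd : ∀ t : ℝ, HasDerivAt (fun x : ℝ => Complex.exp (c * x)) (c * Complex.exp (c * t)) t := by
    intro t
    have := ((hasDerivAt_id (t:ℂ)).const_mul c).cexp.comp_ofReal
    simpa [mul_comm] using this
  rw [intervalIntegral.integral_eq_sub_of_hasDerivAt (fun t _ => hd t) (hc.intervalIntegrable _ _)]
  simp

/-- Variation of constants for the scalar equation `y' = c y + h`. -/
lemma IsPrim.duhamel {y g h : ℝ → ℂ} {c : ℂ} (hy : IsPrim y g)
    (hgh : ∀ᵐ x ∂(volume.restrict (Icc (0:ℝ) 1)), g x = c * y x + h x)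
    {x : ℝ} (hx : x ∈ Icc (0:ℝ) 1) :
    y x = Complex.exp (c * x) * y 0 +
      ∫ t in (0:ℝ)..x, Complex.exp (c * (x - t)) * h t := by
  have h1 := (hy.mul (isPrim_exp (-c))).congr_ae
    (h := fun x => Complex.exp (-c * x) * h x) (by
      filter_upwards [hgh] with t ht
      rw [ht]; ring)
  have h2 := h1.2 x hx
  simp only [ofReal_zero, mul_zero, Complex.exp_zero, mul_one] at h2
  have h3 : y x = Complex.exp (c * x) * (y x * Complex.exp (-c * x)) := by
    rw [mul_left_comm, ← Complex.exp_add]; simp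
  rw [h3, h2, mul_add, ← intervalIntegral.integral_const_mul]
  congr 2
  ext t
  rw [← mul_assoc, ← Complex.exp_add]
  congr 2
  ring

/-! ### The exponential weight -/

/-- The kernel `p` is split into a bounded part `min p n`, whose weighted integral is at most
`n / K`, and the tail `(p - n)⁺`, of small integral for large `n`. -/
lemma exists_weight {p : ℝ → ℝ} (hp : Integrable p) (hp0 : ∀ t, 0 ≤ p t) :
    ∃ K : ℝ, 0 ≤ K ∧ ∀ x : ℝ, 0 ≤ x →
      ∫ t in Ioc 0 x, p t * Real.exp (-K * (x - t)) ≤ 1 / 2 := by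
  have hlim : Tendsto (fun n : ℕ => ∫ t, max (p t - n) 0) atTop (nhds (∫ _ : ℝ, (0:ℝ))) := by
    refine tendsto_integral_of_dominated_convergence p (fun n => ?_) hp (fun n => ?_) ?_
    · exact (hp.aestronglyMeasurable.sub aestronglyMeasurable_const).sup aestronglyMeasurable_const
    · refine Eventually.of_forall fun t => ?_
      rw [Real.norm_of_nonneg (le_max_right _ _)]
      exact max_le (by have := Nat.cast_nonneg (α := ℝ) n; linarith) (hp0 t)
    · refine Eventually.of_forall fun t => ?_
      refine tendsto_const_nhds.congr' ?_
      obtain ⟨N, hN⟩ := exists_nat_ge (p t)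
      filter_upwards [eventually_ge_atTop N] with n hn
      have : (N:ℝ) ≤ n := by exact_mod_cast hn
      rw [max_eq_right (by linarith)]
  rw [integral_zero] at hlim
  obtain ⟨n, hn⟩ := (hlim.eventually (gt_mem_nhds (by norm_num : (0:ℝ) < 1 / 4))).exists
  have hn0 : (0:ℝ) ≤ n := Nat.cast_nonneg n
  have hmi : Integrable (fun t => max (p t - n) 0) := by
    refine hp.mono' ((hp.aestronglyMeasurable.sub aestronglyMeasurable_const).sup
      aestronglyMeasurable_const) (Eventually.of_forall fun t => ?_)
    rw [Real.norm_of_nonneg (le_max_right _ _)]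
    exact max_le (by linarith) (hp0 t)
  -- This choice gives `n / K ≤ 1/4`, the other `1/4` being left for the tail.
  set K : ℝ := 4 * n + 1 with hK
  have hKpos : 0 < K := by positivity
  refine ⟨K, hKpos.le, fun x hx => ?_⟩
  have hE : Continuous (fun t : ℝ => (n:ℝ) * Real.exp (-K * (x - t))) := by fun_prop
  have hEi : IntegrableOn (fun t : ℝ => (n:ℝ) * Real.exp (-K * (x - t))) (Ioc 0 x) :=
    (hE.integrableOn_Icc (a := 0) (b := x)).mono_set Ioc_subset_Icc_self
  have h1 : ∫ t in Ioc 0 x, p t * Real.exp (-K * (x - t)) ≤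
      ∫ t in Ioc 0 x, (max (p t - n) 0 + n * Real.exp (-K * (x - t))) := by
    refine integral_mono_of_nonneg (Eventually.of_forall fun t => ?_)
      (hmi.integrableOn.add hEi) ?_
    · exact mul_nonneg (hp0 t) (Real.exp_pos _).le
    · filter_upwards [ae_restrict_mem measurableSet_Ioc] with t ht
      have he1 : Real.exp (-K * (x - t)) ≤ 1 := by
        rw [Real.exp_le_one_iff]
        nlinarith [ht.2]
      have he0 := Real.exp_pos (-K * (x - t))
      have hm1 := le_max_left (p t - n) 0
      have hm0 := le_max_right (p t - n) 0
      calc p t * Real.exp (-K * (x - t))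
          ≤ (max (p t - n) 0 + n) * Real.exp (-K * (x - t)) := by
            gcongr; linarith
        _ ≤ _ := by rw [add_mul]; gcongr; exact mul_le_of_le_one_right hm0 he1
  have h2 : ∫ t in Ioc 0 x, (n:ℝ) * Real.exp (-K * (x - t)) ≤ 1 / 4 := by
    rw [← intervalIntegral.integral_of_le hx]
    have hd : ∀ t ∈ uIcc 0 x, HasDerivAt (fun t : ℝ => n / K * Real.exp (-K * (x - t)))
        ((n:ℝ) * Real.exp (-K * (x - t))) t := by
      intro t _
      have : HasDerivAt (fun t : ℝ => n / K * Real.exp (-K * (x - t)))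
          (n / K * (Real.exp (-K * (x - t)) * (-K * -1))) t :=
        ((((hasDerivAt_id t).const_sub x).const_mul (-K)).exp).const_mul (n / K : ℝ)
      convert this using 1
      field_simp
    rw [intervalIntegral.integral_eq_sub_of_hasDerivAt hd (hE.intervalIntegrable _ _)]
    have e1 : (n:ℝ) / K ≤ 1 / 4 := by
      rw [div_le_div_iff₀ hKpos (by norm_num)]; linarith
    have e2 : 0 ≤ (n:ℝ) / K * Real.exp (-K * (x - 0)) := by positivity
    simp only [sub_self, mul_zero, Real.exp_zero, mul_one]
    linarith
  have h3 : ∫ t in Ioc 0 x, max (p t - n) 0 ≤ 1 / 4 :=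
    (setIntegral_le_integral hmi (Eventually.of_forall fun t => le_max_right _ _)).trans hn.le
  rw [integral_add hmi.integrableOn hEi] at h1
  linarith

/-! ### Densities and the Volterra operator -/

/-- `f x` is, for every `x ∈ [0,1]`, an integrable density supported in `[lo x, hi x]`, of
`L¹` norm at most `A e^{K x}`, whose Fourier–Laplace transform is `λ ↦ u λ x`. -/
structure DensRep (lo hi K A : ℝ) (f : ℝ → ℝ → ℂ) (u : ℂ → ℝ → ℂ) : Prop where
  meas : Measurable (Function.uncurry f)
  supp : ∀ x ∈ Icc (0:ℝ) 1, ∀ s, f x s ≠ 0 → s ∈ Icc (lo * x) (hi * x)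
  int : ∀ x ∈ Icc (0:ℝ) 1, Integrable (f x)
  bound : ∀ x ∈ Icc (0:ℝ) 1, ∫ s, ‖f x s‖ ≤ A * Real.exp (K * x)
  rep : ∀ l, ∀ x ∈ Icc (0:ℝ) 1, u l x = ∫ s, f x s * Complex.exp (I * l * s)

/-- The scalar Volterra operator `u ↦ ∫₀ˣ e^{c(x-t)} q(t) u(t) dt`. -/
def volt (c : ℂ) (q u : ℝ → ℂ) (x : ℝ) : ℂ :=
  ∫ t in Ioc 0 x, Complex.exp (c * (x - t)) * (q t * u t)

/-- The action of `volt (i β λ) q` on densities: multiplication by `e^{i β λ (x-t)}` becomes the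
translation by `β (x-t)`. -/
def voltDens (β : ℝ) (q : ℝ → ℂ) (f : ℝ → ℝ → ℂ) (x s : ℝ) : ℂ :=
  ∫ t in Ioc 0 x, q t * f t (s - β * (x - t))

lemma norm_exp_le_of_supp (l : ℂ) {lo hi s : ℝ} (hs : s ∈ Icc lo hi) :
    ‖Complex.exp (I * l * s)‖ ≤ Real.exp (‖l‖ * (|lo| + |hi|)) := by
  refine (Complex.norm_exp_le_exp_norm _).trans (Real.exp_le_exp.2 ?_)
  rw [norm_mul, norm_mul, norm_I, one_mul, norm_real, Real.norm_eq_abs]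
  refine mul_le_mul_of_nonneg_left ?_ (norm_nonneg _)
  rw [abs_le]
  have := neg_abs_le lo
  have := le_abs_self hi
  have := abs_nonneg lo
  have := abs_nonneg hi
  exact ⟨by linarith [hs.1], by linarith [hs.2]⟩

/-- Applying the Volterra operator preserves representability by densities, as `β (x - t)` plus a
point of `[lo t, hi t]` lies in `[lo x, hi x]`, and halves the weighted norm bound. The
representation and the bound are both Fubini on `(0,x] × ℝ`. -/
lemma DensRep.step {lo hi K A β : ℝ} {q : ℝ → ℂ} {f : ℝ → ℝ → ℂ} {u : ℂ → ℝ → ℂ}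
    (h : DensRep lo hi K A f u) (hβ : β ∈ Icc lo hi) (hK : 0 ≤ K) (hqm : Measurable q)
    (hqi : Integrable q)
    (hw : ∀ x : ℝ, 0 ≤ x → ∫ t in Ioc 0 x, ‖q t‖ * Real.exp (-K * (x - t)) ≤ 1 / 2) :
    DensRep lo hi K (A / 2) (voltDens β q f) (fun l => volt (I * β * l) q (u l)) := by
  have hA : 0 ≤ A := by
    have h0 := h.bound 0 (by simp)
    simp only [mul_zero, Real.exp_zero, mul_one] at h0
    exact (integral_nonneg fun s => norm_nonneg _).trans h0
  have hmF : Measurable (fun z : (ℝ × ℝ) × ℝ => q z.2 * f z.2 (z.1.2 - β * (z.1.1 - z.2))) :=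
    (hqm.comp measurable_snd).mul (h.meas.comp (by fun_prop :
      Measurable (fun z : (ℝ × ℝ) × ℝ => (z.2, z.1.2 - β * (z.1.1 - z.2)))))
  have hshift : ∀ x s t : ℝ, t ∈ Icc (0:ℝ) 1 → t ≤ x → f t (s - β * (x - t)) ≠ 0 →
      s ∈ Icc (lo * x) (hi * x) := by
    intro x s t ht htx hne
    have := h.supp t ht _ hne
    constructor
    · nlinarith [this.1, hβ.1]
    · nlinarith [this.2, hβ.2]
  have hsub : ∀ {x t : ℝ}, x ∈ Icc (0:ℝ) 1 → t ∈ Ioc 0 x → t ∈ Icc (0:ℝ) 1 :=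
    fun hx ht => ⟨ht.1.le, ht.2.trans hx.2⟩
  -- The joint density on `(0,x] × ℝ`.
  have hFm : ∀ x, Measurable (fun z : ℝ × ℝ => q z.1 * f z.1 (z.2 - β * (x - z.1))) := fun x =>
    hmF.comp (by fun_prop : Measurable (fun z : ℝ × ℝ => (((x, z.2) : ℝ × ℝ), z.1)))
  have hnorm : ∀ x t : ℝ, ∫ s, ‖q t * f t (s - β * (x - t))‖ = ‖q t‖ * ∫ s, ‖f t s‖ := by
    intro x t
    simp_rw [norm_mul]
    rw [integral_const_mul, integral_sub_right_eq_self (fun s => ‖f t s‖)]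
  have hFi : ∀ x ∈ Icc (0:ℝ) 1, Integrable (fun z : ℝ × ℝ => q z.1 * f z.1 (z.2 - β * (x - z.1)))
      ((volume.restrict (Ioc 0 x)).prod volume) := by
    intro x hx
    rw [integrable_prod_iff (hFm x).aestronglyMeasurable]
    constructor
    · filter_upwards [ae_restrict_mem measurableSet_Ioc] with t ht
      exact ((h.int t (hsub hx ht)).comp_sub_right _).const_mul _
    · refine Integrable.mono' (hqi.norm.mul_const (A * Real.exp K)).integrableOn
        (hFm x).norm.stronglyMeasurable.integral_prod_right'.aestronglyMeasurable ?_
      filter_upwards [ae_restrict_mem measurableSet_Ioc] with t ht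
      rw [Real.norm_of_nonneg (integral_nonneg fun s => norm_nonneg _), hnorm]
      refine mul_le_mul_of_nonneg_left ((h.bound t (hsub hx ht)).trans ?_) (norm_nonneg _)
      gcongr
      exact mul_le_of_le_one_right hK (hsub hx ht).2
  refine ⟨?_, ?_, ?_, ?_, ?_⟩
  · have : Measurable (fun z : (ℝ × ℝ) × ℝ => indicator {z : (ℝ × ℝ) × ℝ | 0 < z.2 ∧ z.2 ≤ z.1.1}
        (fun z => q z.2 * f z.2 (z.1.2 - β * (z.1.1 - z.2))) z) := by
      refine hmF.indicator (MeasurableSet.inter ?_ ?_)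
      · exact measurableSet_lt measurable_const measurable_snd
      · exact measurableSet_le measurable_snd (measurable_fst.comp measurable_fst)
    have h2 := (this.stronglyMeasurable.integral_prod_right' (ν := volume)).measurable
    convert h2 using 1
    ext ⟨x, s⟩
    simp only [Function.uncurry, voltDens]
    rw [← integral_indicator measurableSet_Ioc]
    rfl
  · intro x hx s hne
    by_contra hs
    apply hne
    refine setIntegral_eq_zero_of_forall_eq_zero fun t ht => ?_
    by_contra hc
    exact hs (hshift x s t (hsub hx ht) ht.2 (right_ne_zero_of_mul hc))
  · exact fun x hx => (hFi x hx).integral_prod_right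
  · intro x hx
    calc ∫ s, ‖voltDens β q f x s‖
        ≤ ∫ s, ∫ t in Ioc 0 x, ‖q t * f t (s - β * (x - t))‖ := by
          refine integral_mono_of_nonneg (Eventually.of_forall fun s => norm_nonneg _)
            (hFi x hx).norm.integral_prod_right (Eventually.of_forall fun s => ?_)
          exact norm_integral_le_integral_norm _
      _ = ∫ t in Ioc 0 x, ∫ s, ‖q t * f t (s - β * (x - t))‖ :=
          (integral_integral_swap (f := fun t s => ‖q t * f t (s - β * (x - t))‖)
            (hFi x hx).norm).symm
      _ ≤ ∫ t in Ioc 0 x, A * Real.exp (K * x) * (‖q t‖ * Real.exp (-K * (x - t))) := by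
          refine integral_mono_of_nonneg (Eventually.of_forall fun t =>
            integral_nonneg fun s => norm_nonneg _) ?_ ?_
          · refine Integrable.const_mul ?_ _
            refine Integrable.mono' hqi.norm.integrableOn
              (by fun_prop) ?_
            filter_upwards [ae_restrict_mem measurableSet_Ioc] with t ht
            rw [norm_mul, norm_norm, Real.norm_of_nonneg (Real.exp_pos _).le]
            refine mul_le_of_le_one_right (norm_nonneg _) ?_
            rw [Real.exp_le_one_iff]
            nlinarith [ht.2]
          · filter_upwards [ae_restrict_mem measurableSet_Ioc] with t ht
            rw [hnorm]
            calc ‖q t‖ * ∫ s, ‖f t s‖ ≤ ‖q t‖ * (A * Real.exp (K * t)) :=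
                  mul_le_mul_of_nonneg_left (h.bound t (hsub hx ht)) (norm_nonneg _)
              _ = _ := by
                have : Real.exp (K * t) = Real.exp (K * x) * Real.exp (-K * (x - t)) := by
                  rw [← Real.exp_add]; ring_nf
                rw [this]; ring
      _ = A * Real.exp (K * x) * ∫ t in Ioc 0 x, ‖q t‖ * Real.exp (-K * (x - t)) :=
          integral_const_mul _ _
      _ ≤ A * Real.exp (K * x) * (1 / 2) := by
          gcongr; exact hw x hx.1
      _ = A / 2 * Real.exp (K * x) := by ring
  · intro l x hx
    have hFe : Integrable (fun z : ℝ × ℝ =>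
        q z.1 * f z.1 (z.2 - β * (x - z.1)) * Complex.exp (I * l * z.2))
        ((volume.restrict (Ioc 0 x)).prod volume) := by
      refine Integrable.mono' ((hFi x hx).norm.mul_const
        (Real.exp (‖l‖ * (|lo * x| + |hi * x|)))) ?_ ?_
      · exact ((hFm x).mul (by fun_prop)).aestronglyMeasurable
      · have hae : ∀ᵐ t ∂(volume.restrict (Ioc 0 x)), t ∈ Ioc 0 x :=
          ae_restrict_mem measurableSet_Ioc
        filter_upwards [(Measure.quasiMeasurePreserving_fst (ν := (volume : Measure ℝ))).ae hae]
          with z hz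
        rw [norm_mul]
        by_cases hc : f z.1 (z.2 - β * (x - z.1)) = 0
        · simp [hc]
        · exact mul_le_mul_of_nonneg_left (norm_exp_le_of_supp l
            (hshift x z.2 z.1 (hsub hx hz) hz.2 hc)) (norm_nonneg _)
    calc volt (I * β * l) q (u l) x
        = ∫ t in Ioc 0 x, ∫ s, q t * f t (s - β * (x - t)) * Complex.exp (I * l * s) := by
          refine setIntegral_congr_fun measurableSet_Ioc fun t ht => ?_
          rw [h.rep l t (hsub hx ht), ← integral_sub_right_eq_self _ (β * (x - t)),
            ← integral_const_mul, ← integral_const_mul]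
          refine integral_congr_ae (Eventually.of_forall fun s => ?_)
          have : Complex.exp (I * l * s) = Complex.exp (I * β * l * (x - t)) *
              Complex.exp (I * l * ((s - β * (x - t) : ℝ))) := by
            rw [← Complex.exp_add]; congr 1; push_cast; ring
          simp only [this]; ring
      _ = ∫ s, ∫ t in Ioc 0 x, q t * f t (s - β * (x - t)) * Complex.exp (I * l * s) :=
          integral_integral_swap (f := fun t s =>
            q t * f t (s - β * (x - t)) * Complex.exp (I * l * s)) hFe
      _ = _ := by
          refine integral_congr_ae (Eventually.of_forall fun s => ?_)
          simp only [voltDens]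
          rw [integral_mul_const]

lemma densRep_zero (lo hi K : ℝ) : DensRep lo hi K 0 (fun _ _ => 0) (fun _ _ => 0) := by
  refine ⟨measurable_const, fun x _ s h => absurd rfl h, fun x _ => integrable_zero _ _ _,
    fun x _ => by simp, fun l x _ => by simp⟩

lemma DensRep.mono {lo hi K A A' : ℝ} {f : ℝ → ℝ → ℂ} {u : ℂ → ℝ → ℂ}
    (h : DensRep lo hi K A f u) (hA : A ≤ A') : DensRep lo hi K A' f u :=
  ⟨h.meas, h.supp, h.int, fun x hx => (h.bound x hx).trans (by gcongr), h.rep⟩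

/-- The density of the first iterate applied to `e^{i γ λ x}`: the substitution
`s = β x + (γ - β) t` turns `∫₀ˣ e^{i β λ (x-t)} q(t) e^{i γ λ t} dt` into a Fourier integral. -/
def firstDens (β γ : ℝ) (q : ℝ → ℂ) (x s : ℝ) : ℂ :=
  (|γ - β|⁻¹ : ℝ) * (Ioc 0 x).indicator q ((γ - β)⁻¹ * (s - β * x))

lemma integral_firstDens_comp {E : Type*} [NormedAddCommGroup E] [NormedSpace ℝ E] {β γ x : ℝ}
    (h : γ - β ≠ 0) (F : ℝ → E) :
    ∫ s, |γ - β|⁻¹ • F ((γ - β)⁻¹ * (s - β * x)) = ∫ t, F t := by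
  rw [integral_smul, integral_sub_right_eq_self (fun s => F ((γ - β)⁻¹ * s)),
    Measure.integral_comp_mul_left, inv_inv, smul_smul, inv_mul_cancel₀ (abs_ne_zero.2 h), one_smul]

/-- The unperturbed exponential `e^{i γ λ x}` itself has no `L¹` density (it is the transform of a
Dirac mass), but its first Volterra iterate has one, since `γ ≠ β`. -/
lemma densRep_first {lo hi K β γ : ℝ} {q : ℝ → ℂ} (hβ : β ∈ Icc lo hi) (hγ : γ ∈ Icc lo hi)
    (hK : 0 ≤ K) (hne : γ - β ≠ 0) (hqm : Measurable q) (hqi : Integrable q) :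
    DensRep lo hi K (∫ t, ‖q t‖) (firstDens β γ q)
      (fun l => volt (I * β * l) q (fun t => Complex.exp (I * γ * l * t))) := by
  refine ⟨?_, ?_, ?_, ?_, ?_⟩
  · have h1 : Measurable (fun z : ℝ × ℝ =>
        indicator {z : ℝ × ℝ | 0 < (γ - β)⁻¹ * (z.2 - β * z.1) ∧
          (γ - β)⁻¹ * (z.2 - β * z.1) ≤ z.1}
        (fun z => q ((γ - β)⁻¹ * (z.2 - β * z.1))) z) := by
      have hm : Measurable (fun z : ℝ × ℝ => (γ - β)⁻¹ * (z.2 - β * z.1)) := by fun_prop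
      refine (hqm.comp hm).indicator (MeasurableSet.inter ?_ ?_)
      · exact measurableSet_lt measurable_const hm
      · exact measurableSet_le hm measurable_fst
    exact h1.const_mul _
  · intro x hx s hs
    have hmem : (γ - β)⁻¹ * (s - β * x) ∈ Ioc 0 x := by
      by_contra hc
      exact hs (by simp [firstDens, indicator_of_notMem hc])
    set t := (γ - β)⁻¹ * (s - β * x) with ht
    have hst : s = β * (x - t) + γ * t := by
      rw [ht]; field_simp; ring
    rw [hst]
    have h1 := hmem.1
    have h2 := hmem.2
    constructor
    · nlinarith [hβ.1, hγ.1]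
    · nlinarith [hβ.2, hγ.2]
  · intro x _
    have h1 : Integrable ((Ioc 0 x).indicator q) := hqi.indicator measurableSet_Ioc
    exact ((h1.comp_mul_left' (inv_ne_zero hne)).comp_sub_right (β * x)).const_mul _
  · intro x hx
    have e : ∀ s, ‖firstDens β γ q x s‖ =
        |γ - β|⁻¹ • (fun t => ‖(Ioc 0 x).indicator q t‖) ((γ - β)⁻¹ * (s - β * x)) := by
      intro s
      simp only [firstDens, norm_mul, norm_real, Real.norm_eq_abs, abs_inv, abs_abs, smul_eq_mul]
    rw [integral_congr_ae (Eventually.of_forall e),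
      integral_firstDens_comp hne (fun t => ‖(Ioc 0 x).indicator q t‖)]
    have h1 : ∫ t, ‖(Ioc 0 x).indicator q t‖ ≤ ∫ t, ‖q t‖ :=
      integral_mono (hqi.indicator measurableSet_Ioc).norm hqi.norm
        (fun t => norm_indicator_le_norm_self _ _)
    refine h1.trans (le_mul_of_one_le_right (integral_nonneg fun t => norm_nonneg _) ?_)
    exact Real.one_le_exp (mul_nonneg hK hx.1)
  · intro l x hx
    have e : ∀ s, firstDens β γ q x s * Complex.exp (I * l * s) =
        |γ - β|⁻¹ • (fun t => (Ioc 0 x).indicator (fun t =>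
          Complex.exp (I * β * l * (x - t)) * (q t * Complex.exp (I * γ * l * t))) t)
          ((γ - β)⁻¹ * (s - β * x)) := by
      intro s
      simp only [firstDens, real_smul]
      by_cases hc : (γ - β)⁻¹ * (s - β * x) ∈ Ioc 0 x
      · rw [indicator_of_mem hc, indicator_of_mem hc]
        set t := (γ - β)⁻¹ * (s - β * x) with ht
        have hst : s = β * (x - t) + γ * t := by
          rw [ht]; field_simp; ring
        have he : Complex.exp (I * l * s) =
            Complex.exp (I * β * l * (x - t)) * Complex.exp (I * γ * l * t) := by
          rw [← Complex.exp_add, hst]; congr 1; push_cast; ring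
        rw [he]; ring
      · rw [indicator_of_notMem hc, indicator_of_notMem hc]; simp
    rw [integral_congr_ae (Eventually.of_forall e), integral_firstDens_comp hne,
      integral_indicator measurableSet_Ioc]
    rfl

/-! ### Volterra operators on continuous functions -/

lemma integrable_volt_integrand {c : ℂ} {q u : ℝ → ℂ} (hqi : Integrable q)
    (hu : ContinuousOn u (Icc (0:ℝ) 1)) (x : ℝ) :
    IntegrableOn (fun t : ℝ => Complex.exp (c * (x - t)) * (q t * u t)) (Icc (0:ℝ) 1) := by
  have h1 : IntegrableOn (fun t => q t * u t) (Icc (0:ℝ) 1) :=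
    hqi.integrableOn.mul_continuousOn hu isCompact_Icc
  exact h1.continuousOn_mul (by fun_prop) isCompact_Icc

lemma volt_eq_mul {c : ℂ} {q u : ℝ → ℂ} {x : ℝ} (hx : 0 ≤ x) :
    volt c q u x = Complex.exp (c * x) *
      ∫ t in (0:ℝ)..x, Complex.exp (c * ((0:ℝ) - t)) * (q t * u t) := by
  rw [intervalIntegral.integral_of_le hx, volt, ← integral_const_mul]
  refine integral_congr_ae (Eventually.of_forall fun t => ?_)
  have he : Complex.exp (c * (x - t)) =
      Complex.exp (c * x) * Complex.exp (c * ((0:ℝ) - t)) := by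
    rw [← Complex.exp_add]; congr 1; push_cast; ring
  simp only [he]
  ring

lemma continuousOn_volt {c : ℂ} {q u : ℝ → ℂ} (hqi : Integrable q)
    (hu : ContinuousOn u (Icc (0:ℝ) 1)) : ContinuousOn (volt c q u) (Icc (0:ℝ) 1) := by
  have h1 := intervalIntegral.continuousOn_primitive_interval (a := 0) (b := 1)
    (μ := volume) (f := fun t : ℝ => Complex.exp (c * ((0:ℝ) - t)) * (q t * u t))
    (by rw [uIcc_of_le zero_le_one]; exact integrable_volt_integrand hqi hu 0)
  rw [uIcc_of_le zero_le_one] at h1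
  refine ContinuousOn.congr (f := fun x : ℝ => Complex.exp (c * x) *
      ∫ t in (0:ℝ)..x, Complex.exp (c * ((0:ℝ) - t)) * (q t * u t)) ?_ fun x hx => volt_eq_mul hx.1
  exact (by fun_prop : Continuous fun x : ℝ => Complex.exp (c * x)).continuousOn.mul h1

lemma volt_congr {c : ℂ} {q u v : ℝ → ℂ} (h : EqOn u v (Icc (0:ℝ) 1)) :
    EqOn (volt c q u) (volt c q v) (Icc (0:ℝ) 1) := by
  intro x hx
  refine setIntegral_congr_fun measurableSet_Ioc fun t ht => ?_
  simp only [h ⟨ht.1.le, ht.2.trans hx.2⟩]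

lemma volt_sub {c : ℂ} {q u v : ℝ → ℂ} (hqi : Integrable q) (hu : ContinuousOn u (Icc (0:ℝ) 1))
    (hv : ContinuousOn v (Icc (0:ℝ) 1)) {x : ℝ} (hx : x ∈ Icc (0:ℝ) 1) :
    volt c q (fun t => u t - v t) x = volt c q u x - volt c q v x := by
  have hsub : Ioc 0 x ⊆ Icc (0:ℝ) 1 := fun t ht => ⟨ht.1.le, ht.2.trans hx.2⟩
  rw [volt, volt, volt, ← integral_sub ((integrable_volt_integrand hqi hu x).mono_set hsub)
    ((integrable_volt_integrand hqi hv x).mono_set hsub)]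
  refine integral_congr_ae (Eventually.of_forall fun t => ?_)
  simp only; ring

/-- In the weighted norm `sup |u(x)| e^{-(K+L)x}` with `‖c‖ ≤ L`, the operator `volt c q` is a
contraction with constant `1/2`. -/
lemma norm_volt_le {c : ℂ} {q u : ℝ → ℂ} {K L A : ℝ} (hK : 0 ≤ K) (hqi : Integrable q)
    (hw : ∀ x : ℝ, 0 ≤ x → ∫ t in Ioc 0 x, ‖q t‖ * Real.exp (-K * (x - t)) ≤ 1 / 2)
    (hc : ‖c‖ ≤ L) (hA : 0 ≤ A)
    (hu : ∀ x ∈ Icc (0:ℝ) 1, ‖u x‖ ≤ A * Real.exp ((K + L) * x)) :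
    ∀ x ∈ Icc (0:ℝ) 1, ‖volt c q u x‖ ≤ A / 2 * Real.exp ((K + L) * x) := by
  intro x hx
  have hinteg : IntegrableOn (fun t => ‖q t‖ * Real.exp (-K * (x - t))) (Ioc 0 x) := by
    refine Integrable.mono' hqi.norm.integrableOn
      (hqi.integrableOn.norm.aestronglyMeasurable.mul (by fun_prop)) ?_
    filter_upwards [ae_restrict_mem measurableSet_Ioc] with t ht
    rw [norm_mul, norm_norm, Real.norm_of_nonneg (Real.exp_pos _).le]
    refine mul_le_of_le_one_right (norm_nonneg _) ?_
    rw [Real.exp_le_one_iff]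
    nlinarith [ht.2]
  calc ‖volt c q u x‖
      ≤ ∫ t in Ioc 0 x, A * Real.exp ((K + L) * x) * (‖q t‖ * Real.exp (-K * (x - t))) := by
        refine norm_integral_le_of_norm_le (hinteg.const_mul _) ?_
        filter_upwards [ae_restrict_mem measurableSet_Ioc] with t ht
        have h1 : ‖Complex.exp (c * (x - t))‖ ≤ Real.exp (L * (x - t)) := by
          refine (Complex.norm_exp_le_exp_norm _).trans (Real.exp_le_exp.2 ?_)
          have hxt : 0 ≤ x - t := by linarith [ht.2]
          rw [norm_mul, ← ofReal_sub, norm_real, Real.norm_of_nonneg hxt]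
          gcongr
        have h2 := hu t ⟨ht.1.le, ht.2.trans hx.2⟩
        rw [norm_mul, norm_mul]
        calc ‖Complex.exp (c * (x - t))‖ * (‖q t‖ * ‖u t‖)
            ≤ Real.exp (L * (x - t)) * (‖q t‖ * (A * Real.exp ((K + L) * t))) := by gcongr
          _ = _ := by
            have : Real.exp (L * (x - t)) * Real.exp ((K + L) * t) =
                Real.exp ((K + L) * x) * Real.exp (-K * (x - t)) := by
              rw [← Real.exp_add, ← Real.exp_add]; ring_nf
            linear_combination (‖q t‖ * A) * this
    _ = A * Real.exp ((K + L) * x) * ∫ t in Ioc 0 x, ‖q t‖ * Real.exp (-K * (x - t)) :=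
        integral_const_mul _ _
    _ ≤ A * Real.exp ((K + L) * x) * (1 / 2) := by gcongr; exact hw x hx.1
    _ = _ := by ring

lemma integrable_tsum_of_summable {f : ℕ → ℝ → ℂ} (hf : ∀ n, Integrable (f n))
    (hs : Summable fun n => ∫ s, ‖f n s‖) : Integrable (fun s => ∑' n, f n s) := by
  have hfin : ∑' n, ∫⁻ s, ‖f n s‖ₑ ≠ ∞ := by
    have e : ∀ n, ∫⁻ s, ‖f n s‖ₑ = ENNReal.ofReal (∫ s, ‖f n s‖) := fun n =>
      (ofReal_integral_norm_eq_lintegral_enorm (hf n)).symm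
    simp_rw [e]
    exact hs.tsum_ofReal_ne_top
  have hswap : ∫⁻ s, ∑' n, ‖f n s‖ₑ = ∑' n, ∫⁻ s, ‖f n s‖ₑ :=
    lintegral_tsum fun n => (hf n).aestronglyMeasurable.enorm
  have hae : ∀ᵐ s, ∑' n, ‖f n s‖ₑ < ∞ := by
    refine ae_lt_top' (AEMeasurable.tsum fun n => (hf n).aestronglyMeasurable.enorm) ?_
    rwa [hswap]
  have hsum : ∀ᵐ s, Summable fun n => f n s := by
    filter_upwards [hae] with s h
    refine Summable.of_norm ?_
    refine (ENNReal.tsum_coe_ne_top_iff_summable_coe (f := fun n => ‖f n s‖₊)).1 h.ne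
  refine ⟨?_, ?_⟩
  · refine aestronglyMeasurable_of_tendsto_ae (u := atTop)
      (f := fun N s => ∑ n ∈ Finset.range N, f n s) (fun N => ?_) ?_
    · exact Finset.aestronglyMeasurable_fun_sum _ fun n _ => (hf n).aestronglyMeasurable
    · filter_upwards [hsum] with s h
      exact h.hasSum.tendsto_sum_nat
  · refine lt_of_le_of_lt (lintegral_mono fun s => ?_) (hswap ▸ hfin.lt_top)
    exact enorm_tsum_le_tsum_enorm

/-! ### Neumann series for a column of the fundamental matrix -/

section Column

variable (b : Fin 2 → ℝ) (q : Fin 2 → ℝ → ℂ) (k : Fin 2)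

/-- The `k`-th column of the unperturbed fundamental matrix. -/
def freeCol (j : Fin 2) (l : ℂ) (x : ℝ) : ℂ :=
  if j = k then Complex.exp (I * b k * l * x) else 0

/-- The terms `V^{n+1} u₀` of the Neumann series, `u₀` being the unperturbed column. -/
def iter : ℕ → Fin 2 → ℂ → ℝ → ℂ
  | 0, j, l => volt (I * b j * l) (q j) (freeCol b k (1 - j) l)
  | n + 1, j, l => volt (I * b j * l) (q j) (iter n (1 - j) l)

/-- The densities whose Fourier–Laplace transforms are the terms `iter`. -/
def iterDens : ℕ → Fin 2 → ℝ → ℝ → ℂ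
  | 0, j => if 1 - j = k then firstDens (b j) (b k) (q j) else fun _ _ => 0
  | n + 1, j => voltDens (b j) (q j) (iterDens n (1 - j))

/-- The remainders `V^{n+1} y` of the Neumann series. -/
def remCol (y : Fin 2 → ℝ → ℂ) (l : ℂ) : ℕ → Fin 2 → ℝ → ℂ
  | 0, j => volt (I * b j * l) (q j) (y (1 - j))
  | n + 1, j => volt (I * b j * l) (q j) (remCol y l n (1 - j))

variable {b q k}

/-- Every term of the Neumann series has a density, with geometrically decreasing `L¹` norms. -/
lemma densRep_iter {K : ℝ} (hb : b 0 < b 1) (hK : 0 ≤ K)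
    (hqm : ∀ j, Measurable (q j)) (hqi : ∀ j, Integrable (q j))
    (hw : ∀ j, ∀ x : ℝ, 0 ≤ x → ∫ t in Ioc 0 x, ‖q j t‖ * Real.exp (-K * (x - t)) ≤ 1 / 2)
    (n : ℕ) : ∀ j, DensRep (b 0) (b 1) K ((∑ i, ∫ t, ‖q i t‖) / 2 ^ n)
      (iterDens b q k n j) (iter b q k n j) := by
  have hmem : ∀ j, b j ∈ Icc (b 0) (b 1) := by
    intro j; fin_cases j
    · exact ⟨le_rfl, hb.le⟩
    · exact ⟨hb.le, le_rfl⟩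
  have hnn : ∀ i, 0 ≤ ∫ t, ‖q i t‖ := fun i => integral_nonneg fun t => norm_nonneg _
  induction n with
  | zero =>
    intro j
    rw [pow_zero, div_one]
    by_cases hj : 1 - j = k
    · have hne : b k - b j ≠ 0 := by
        subst hj
        fin_cases j
        · simpa using sub_ne_zero.2 hb.ne'
        · simpa using sub_ne_zero.2 hb.ne
      have := (densRep_first (hmem j) (hmem k) hK hne (hqm j) (hqi j)).mono
        (Finset.single_le_sum (f := fun i => ∫ t, ‖q i t‖) (fun i _ => hnn i) (Finset.mem_univ j))
      have hfc : ∀ l, freeCol b k (1 - j) l = fun t : ℝ => Complex.exp (I * b k * l * t) := by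
        intro l; ext t; simp [freeCol, hj]
      simpa only [iterDens, iter, hfc, if_pos hj] using this
    · have := (densRep_zero (b 0) (b 1) K).mono
        (Finset.sum_nonneg (s := Finset.univ) (f := fun i => ∫ t, ‖q i t‖) fun i _ => hnn i)
      convert this using 1
      · simp [iterDens, hj]
      · ext l x
        simp [iter, freeCol, hj, volt]
  | succ n ih =>
    intro j
    have := (ih (1 - j)).step (hmem j) hK (hqm j) (hqi j) (hw j)
    rw [pow_succ, ← div_div]
    exact this

/-- Any continuous solution of the integral system with free term `freeCol` has, at `x = 1`, the
form `freeCol` plus the transform of one `λ`-independent density, the sum of the densities of the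
Neumann series. -/
lemma column_rep (hb0 : b 0 < 0) (hb1 : 0 < b 1)
    (hqm : ∀ j, Measurable (q j)) (hqi : ∀ j, Integrable (q j)) (j : Fin 2) :
    ∃ G : ℝ → ℂ, Integrable G ∧ (∀ s, G s ≠ 0 → s ∈ Icc (b 0) (b 1)) ∧
      ∀ (l : ℂ) (y : Fin 2 → ℝ → ℂ), (∀ j, ContinuousOn (y j) (Icc (0:ℝ) 1)) →
        (∀ j, ∀ x ∈ Icc (0:ℝ) 1, y j x = freeCol b k j l x +
          volt (I * b j * l) (q j) (y (1 - j)) x) →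
        y j 1 = freeCol b k j l 1 + ∫ s, G s * Complex.exp (I * l * s) := by
  obtain ⟨K, hK, hwp⟩ := exists_weight (p := fun t => ‖q 0 t‖ + ‖q 1 t‖)
    ((hqi 0).norm.add (hqi 1).norm) (fun t => by positivity)
  have hw : ∀ j, ∀ x : ℝ, 0 ≤ x →
      ∫ t in Ioc 0 x, ‖q j t‖ * Real.exp (-K * (x - t)) ≤ 1 / 2 := by
    intro j x hx
    refine le_trans (integral_mono_of_nonneg (Eventually.of_forall fun t => by positivity) ?_
      (Eventually.of_forall fun t => ?_)) (hwp x hx)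
    · refine Integrable.mono' ((hqi 0).norm.add (hqi 1).norm).integrableOn
        ((((hqm 0).norm.add (hqm 1).norm).mul (by fun_prop)).aestronglyMeasurable) ?_
      filter_upwards [ae_restrict_mem measurableSet_Ioc] with t ht
      rw [norm_mul, Real.norm_of_nonneg (Real.exp_pos _).le, Real.norm_of_nonneg (by positivity)]
      refine mul_le_of_le_one_right (by positivity) ?_
      rw [Real.exp_le_one_iff]
      nlinarith [ht.2]
    · refine mul_le_mul_of_nonneg_right ?_ (Real.exp_pos _).le
      fin_cases j
      · simp
      · simp
  have hrep := densRep_iter (k := k) (hb0.trans hb1) hK hqm hqi hw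
  have h1mem : (1:ℝ) ∈ Icc (0:ℝ) 1 := by simp
  set A := ∑ i, ∫ t, ‖q i t‖ with hA
  set f : ℕ → ℝ → ℂ := fun n => iterDens b q k n j 1 with hf
  have hfi : ∀ n, Integrable (f n) := fun n => (hrep n j).int 1 h1mem
  have hfs : ∀ n s, f n s ≠ 0 → s ∈ Icc (b 0) (b 1) := fun n s h => by
    simpa using (hrep n j).supp 1 h1mem s h
  have hgeom : Summable fun n : ℕ => A / 2 ^ n * Real.exp (K * 1) := by
    have : Summable fun n : ℕ => A * (1 / 2 : ℝ) ^ n :=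
      (summable_geometric_of_lt_one (by norm_num) (by norm_num)).mul_left _
    refine (this.congr fun n => ?_).mul_right _
    rw [one_div, inv_pow]; rfl
  have hfsum : Summable fun n => ∫ s, ‖f n s‖ :=
    Summable.of_nonneg_of_le (fun n => integral_nonneg fun s => norm_nonneg _)
      (fun n => (hrep n j).bound 1 h1mem) hgeom
  refine ⟨fun s => ∑' n, f n s, integrable_tsum_of_summable hfi hfsum, ?_, ?_⟩
  · intro s hs
    by_contra hc
    apply hs
    have : ∀ n, f n s = 0 := fun n => by
      by_contra h
      exact hc (hfs n s h)
    simp [this]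
  intro l y hy heq
  -- Termwise integration of the series of densities.
  set C := Real.exp (‖l‖ * (|b 0| + |b 1|)) with hC
  have hle : ∀ n s, ‖f n s * Complex.exp (I * l * s)‖ ≤ ‖f n s‖ * C := by
    intro n s
    rw [norm_mul]
    by_cases h : f n s = 0
    · simp [h]
    · exact mul_le_mul_of_nonneg_left (norm_exp_le_of_supp l (hfs n s h)) (norm_nonneg _)
  have hei : ∀ n, Integrable (fun s => f n s * Complex.exp (I * l * s)) := fun n =>
    ((hfi n).norm.mul_const C).mono'
      ((hfi n).aestronglyMeasurable.mul (by fun_prop)) (Eventually.of_forall (hle n))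
  have hes : Summable fun n => ∫ s, ‖f n s * Complex.exp (I * l * s)‖ := by
    refine Summable.of_nonneg_of_le (fun n => integral_nonneg fun s => norm_nonneg _)
      (fun n => ?_) (hfsum.mul_right C)
    rw [← integral_mul_const]
    exact integral_mono (hei n).norm ((hfi n).norm.mul_const C) (hle n)
  have hsum := (hasSum_integral_of_summable_integral_norm hei hes).tendsto_sum_nat
  have hterm : ∀ n, ∫ s, f n s * Complex.exp (I * l * s) = iter b q k n j l 1 := fun n =>
    ((hrep n j).rep l 1 h1mem).symm
  simp_rw [hterm, tsum_mul_right] at hsum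
  -- The partial sums telescope.
  have hfree : ∀ j, ContinuousOn (freeCol b k j l) (Icc (0:ℝ) 1) := by
    intro j
    by_cases h : j = k
    · have : freeCol b k j l = fun x : ℝ => Complex.exp (I * b k * l * x) := by
        ext x; simp [freeCol, h]
      rw [this]; exact Continuous.continuousOn (by fun_prop)
    · have : freeCol b k j l = fun _ => 0 := by ext x; simp [freeCol, h]
      rw [this]; exact continuousOn_const
  have hremc : ∀ n j, ContinuousOn (remCol b q y l n j) (Icc (0:ℝ) 1) := by
    intro n
    induction n with
    | zero => exact fun j => continuousOn_volt (hqi j) (hy _)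
    | succ n ih => exact fun j => continuousOn_volt (hqi j) (ih _)
  have htel : ∀ n j, EqOn (iter b q k n j l)
      (fun x => remCol b q y l n j x - remCol b q y l (n + 1) j x) (Icc (0:ℝ) 1) := by
    intro n
    induction n with
    | zero =>
      intro j x hx
      have e : EqOn (freeCol b k (1 - j) l)
          (fun x => y (1 - j) x - remCol b q y l 0 (1 - j) x) (Icc (0:ℝ) 1) := fun x hx => by
        simp only [remCol]
        rw [heq (1 - j) x hx, add_sub_cancel_right]
      have e2 := volt_congr (c := I * b j * l) (q := q j) e hx
      rw [volt_sub (hqi j) (hy _) (hremc 0 _) hx] at e2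
      exact e2
    | succ n ih =>
      intro j x hx
      have e2 := volt_congr (c := I * b j * l) (q := q j) (ih (1 - j)) hx
      rw [volt_sub (hqi j) (hremc n _) (hremc (n + 1) _) hx] at e2
      exact e2
  have hpart : ∀ N, ∑ n ∈ Finset.range N, iter b q k n j l 1 =
      remCol b q y l 0 j 1 - remCol b q y l N j 1 := by
    intro N
    rw [← Finset.sum_range_sub' (fun n => remCol b q y l n j 1)]
    exact Finset.sum_congr rfl fun n _ => htel n j h1mem
  -- The remainders tend to zero geometrically.
  set L := ‖l‖ * (|b 0| + |b 1|) with hL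
  have hcL : ∀ j, ‖I * b j * l‖ ≤ L := by
    intro j
    rw [norm_mul, norm_mul, norm_I, one_mul, norm_real, Real.norm_eq_abs, mul_comm]
    refine mul_le_mul_of_nonneg_left ?_ (norm_nonneg _)
    fin_cases j
    · simp
    · simp
  obtain ⟨M, hM0, hM⟩ : ∃ M, 0 ≤ M ∧ ∀ j, ∀ x ∈ Icc (0:ℝ) 1, ‖y j x‖ ≤ M := by
    choose M hM using fun j => (isCompact_Icc (a := (0:ℝ)) (b := 1)).exists_bound_of_continuousOn
      (hy j)
    refine ⟨∑ i, |M i|, by positivity, fun j x hx => ((hM j x hx).trans (le_abs_self _)).trans ?_⟩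
    exact Finset.single_le_sum (f := fun i => |M i|) (fun i _ => abs_nonneg _) (Finset.mem_univ j)
  have hKL : 0 ≤ K + L := by positivity
  have hrem : ∀ n j, ∀ x ∈ Icc (0:ℝ) 1,
      ‖remCol b q y l n j x‖ ≤ M / 2 ^ (n + 1) * Real.exp ((K + L) * x) := by
    intro n
    induction n with
    | zero =>
      intro j
      rw [zero_add, pow_one]
      refine norm_volt_le hK (hqi j) (hw j) (hcL j) hM0 fun x hx => (hM _ x hx).trans ?_
      exact le_mul_of_one_le_right hM0 (Real.one_le_exp (mul_nonneg hKL hx.1))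
    | succ n ih =>
      intro j
      rw [pow_succ, ← div_div]
      exact norm_volt_le hK (hqi j) (hw j) (hcL j) (by positivity) (ih _)
  have hrem0 : Tendsto (fun n => remCol b q y l n j 1) atTop (nhds 0) := by
    refine squeeze_zero_norm (fun n => hrem n j 1 h1mem) ?_
    have h2 : Tendsto (fun n : ℕ => (1 / 2 : ℝ) ^ (n + 1)) atTop (nhds 0) :=
      (tendsto_pow_atTop_nhds_zero_of_lt_one (by norm_num) (by norm_num)).comp
        (tendsto_add_atTop_nat 1)
    have h3 := (h2.const_mul M).mul_const (Real.exp ((K + L) * 1))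
    rw [mul_zero, zero_mul] at h3
    refine h3.congr fun n => ?_
    rw [one_div, inv_pow]; rfl
  simp_rw [hpart] at hsum
  have hlim := tendsto_nhds_unique hsum (tendsto_const_nhds.sub hrem0)
  rw [heq j 1 h1mem, hlim, sub_zero]
  rfl

end Column

/-! ### Fourier–Laplace transforms of compactly supported densities -/

/-- `h` is the Fourier–Laplace transform of an integrable density supported in `[lo, hi]`. -/
def HasDens (lo hi : ℝ) (h : ℂ → ℂ) : Prop :=
  ∃ G : ℝ → ℂ, Integrable G ∧ (∀ s, G s ≠ 0 → s ∈ Icc lo hi) ∧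
    ∀ l, h l = ∫ s, G s * Complex.exp (I * l * s)

lemma integrable_dens_mul_exp {lo hi : ℝ} {G : ℝ → ℂ} (hG : Integrable G)
    (hs : ∀ s, G s ≠ 0 → s ∈ Icc lo hi) (l : ℂ) :
    Integrable (fun s : ℝ => G s * Complex.exp (I * l * s)) := by
  refine (hG.norm.mul_const (Real.exp (‖l‖ * (|lo| + |hi|)))).mono'
    (hG.aestronglyMeasurable.mul (by fun_prop)) (Eventually.of_forall fun s => ?_)
  rw [norm_mul]
  by_cases h : G s = 0
  · simp [h]
  · exact mul_le_mul_of_nonneg_left (norm_exp_le_of_supp l (hs s h)) (norm_nonneg _)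

lemma HasDens.add {lo hi : ℝ} {h₁ h₂ : ℂ → ℂ} (H₁ : HasDens lo hi h₁) (H₂ : HasDens lo hi h₂) :
    HasDens lo hi (fun l => h₁ l + h₂ l) := by
  obtain ⟨G₁, i₁, s₁, e₁⟩ := H₁
  obtain ⟨G₂, i₂, s₂, e₂⟩ := H₂
  refine ⟨fun s => G₁ s + G₂ s, i₁.add i₂, fun s hs => ?_, fun l => ?_⟩
  · by_cases h : G₁ s = 0
    · exact s₂ s (by simpa [h] using hs)
    · exact s₁ s h
  · simp only [add_mul]
    rw [integral_add (integrable_dens_mul_exp i₁ s₁ l) (integrable_dens_mul_exp i₂ s₂ l), e₁, e₂]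

lemma HasDens.const_mul {lo hi : ℝ} {h : ℂ → ℂ} (H : HasDens lo hi h) (c : ℂ) :
    HasDens lo hi (fun l => c * h l) := by
  obtain ⟨G, i, s, e⟩ := H
  refine ⟨fun s => c * G s, i.const_mul c, fun t ht => s t (right_ne_zero_of_mul ht), fun l => ?_⟩
  beta_reduce
  rw [e, ← integral_const_mul]
  exact integral_congr_ae (Eventually.of_forall fun s => (mul_assoc _ _ _).symm)

/-- Cutting `[b₁, b₂]` at `0` and rescaling both halves to `[0,1]`. -/
lemma HasDens.split {b₁ b₂ : ℝ} (hb₁ : b₁ < 0) (hb₂ : 0 < b₂) {h : ℂ → ℂ}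
    (H : HasDens b₁ b₂ h) :
    ∃ g₁ g₂ : ℝ → ℂ,
      IntegrableOn g₁ (Set.Icc (0:ℝ) 1) ∧ IntegrableOn g₂ (Set.Icc (0:ℝ) 1) ∧
      ∀ l : ℂ, h l =
        (∫ t in Set.Icc (0:ℝ) 1, g₁ t * Complex.exp (Complex.I * (b₁:ℂ) * l * (t:ℂ))) +
        (∫ t in Set.Icc (0:ℝ) 1, g₂ t * Complex.exp (Complex.I * (b₂:ℂ) * l * (t:ℂ))) := by
  obtain ⟨G, hG, hs, he⟩ := H
  refine ⟨fun t => -b₁ * G (b₁ * t), fun t => b₂ * G (b₂ * t),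
    ((hG.comp_mul_left' hb₁.ne).const_mul _).integrableOn,
    ((hG.comp_mul_left' hb₂.ne').const_mul _).integrableOn, fun l => ?_⟩
  have hi := integrable_dens_mul_exp hG hs l
  set F : ℝ → ℂ := fun s => G s * Complex.exp (I * l * s) with hF
  have h1 : ∫ s, F s = ∫ s in Icc b₁ b₂, F s := by
    refine (setIntegral_eq_integral_of_forall_compl_eq_zero fun s hsn => ?_).symm
    have : G s = 0 := by
      by_contra hc
      exact hsn (hs s hc)
    simp [hF, this]
  have scale : ∀ c : ℝ, ∫ s in (0:ℝ)..c, F s = ∫ t in Icc (0:ℝ) 1, (c:ℂ) * F (c * t) := by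
    intro c
    rw [integral_Icc_eq_integral_Ioc, ← intervalIntegral.integral_of_le zero_le_one,
      intervalIntegral.integral_const_mul]
    have := intervalIntegral.smul_integral_comp_mul_left (a := 0) (b := 1) F c
    rw [mul_zero, mul_one, real_smul] at this
    exact this.symm
  rw [he l, h1, integral_Icc_eq_integral_Ioc, ← intervalIntegral.integral_of_le (hb₁.trans hb₂).le,
    ← intervalIntegral.integral_add_adjacent_intervals (b := 0) hi.intervalIntegrable
      hi.intervalIntegrable, intervalIntegral.integral_symm, scale, scale, ← integral_neg]
  congr 1
  · refine integral_congr_ae (Eventually.of_forall fun t => ?_)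
    simp only [hF]
    push_cast
    rw [show I * l * (b₁ * t) = I * b₁ * l * t by ring]
    ring
  · refine integral_congr_ae (Eventually.of_forall fun t => ?_)
    simp only [hF]
    push_cast
    rw [show I * l * (b₂ * t) = I * b₂ * l * t by ring]
    ring

/-! ### The fundamental matrix at the right endpoint -/

lemma IsPrim.sub {y z g h : ℝ → ℂ} (hy : IsPrim y g) (hz : IsPrim z h) :
    IsPrim (fun x => y x - z x) (fun x => g x - h x) := by
  refine ⟨hy.1.sub hz.1, fun x hx => ?_⟩
  have hsub : uIcc (0:ℝ) x ⊆ uIcc (0:ℝ) 1 := by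
    rw [uIcc_of_le hx.1, uIcc_of_le zero_le_one]
    exact Icc_subset_Icc_right hx.2
  rw [intervalIntegral.integral_sub ((intervalIntegrable_of_Icc hy.1).mono_set hsub)
    ((intervalIntegrable_of_Icc hz.1).mono_set hsub)]
  simp only [hy.2 x hx, hz.2 x hx]
  ring

/-- The system solved for the derivative. -/
lemma IsSol.exists_prim {b₁ b₂ : ℝ} (hb₁ : b₁ ≠ 0) (hb₂ : b₂ ≠ 0) {Q₁₂ Q₂₁ : ℝ → ℂ} {l : ℂ}
    {y : ℝ → Fin 2 → ℂ} (hy : IsSol b₁ b₂ Q₁₂ Q₂₁ l y) :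
    ∃ g₀ g₁ : ℝ → ℂ, IsPrim (fun x => y x 0) g₀ ∧ IsPrim (fun x => y x 1) g₁ ∧
      ∀ᵐ x ∂(volume.restrict (Icc (0:ℝ) 1)),
        g₀ x = I * b₁ * (l * y x 0 - Q₁₂ x * y x 1) ∧
        g₁ x = I * b₂ * (l * y x 1 - Q₂₁ x * y x 0) := by
  obtain ⟨g, hgi, hgy, hae⟩ := hy
  refine ⟨fun x => g x 0, fun x => g x 1, ⟨hgi 0, fun x hx => hgy x hx 0⟩,
    ⟨hgi 1, fun x hx => hgy x hx 1⟩, ?_⟩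
  have c1 : (b₁:ℂ) ≠ 0 := by exact_mod_cast hb₁
  have c2 : (b₂:ℂ) ≠ 0 := by exact_mod_cast hb₂
  filter_upwards [hae] with x hx
  constructor
  · rw [← hx.1]
    field_simp
    linear_combination (g x 0) * I_sq
  · rw [← hx.2]
    field_simp
    linear_combination (g x 1) * I_sq

/-- Liouville's formula: the trace of the coefficient matrix is `i (b₁ + b₂) λ`. -/
lemma det_fundSol {b₁ b₂ : ℝ} (hb₁ : b₁ ≠ 0) (hb₂ : b₂ ≠ 0) {Q₁₂ Q₂₁ : ℝ → ℂ}
    {Φ : ℂ → ℝ → Fin 2 → Fin 2 → ℂ} (hΦ : IsFundSol b₁ b₂ Q₁₂ Q₂₁ Φ) (l : ℂ) :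
    Φ l 1 0 0 * Φ l 1 1 1 - Φ l 1 0 1 * Φ l 1 1 0 = Complex.exp (I * (b₁ + b₂) * l) := by
  obtain ⟨h0, hs⟩ := hΦ l
  obtain ⟨g00, g10, p00, p10, e0⟩ := (hs 0).exists_prim hb₁ hb₂
  obtain ⟨g01, g11, p01, p11, e1⟩ := (hs 1).exists_prim hb₁ hb₂
  have hW := (p00.mul p11).sub (p01.mul p10)
  have := hW.duhamel (c := I * (b₁ + b₂) * l) (h := fun _ => 0) (by
    filter_upwards [e0, e1] with x h1 h2
    rw [h1.1, h1.2, h2.1, h2.2]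
    ring) (x := 1) (by simp)
  simpa [h0] using this

/-- Each entry of the fundamental matrix at `x = 1` differs from the unperturbed entry by the
transform of an `L¹` density on `[b₁, b₂]`. -/
theorem hasDens_fundSol {b₁ b₂ : ℝ} (hb₁ : b₁ < 0) (hb₂ : 0 < b₂) {Q₁₂ Q₂₁ : ℝ → ℂ}
    (hQ₁₂ : IntegrableOn Q₁₂ (Set.Icc (0:ℝ) 1)) (hQ₂₁ : IntegrableOn Q₂₁ (Set.Icc (0:ℝ) 1))
    {Φ : ℂ → ℝ → Fin 2 → Fin 2 → ℂ} (hΦ : IsFundSol b₁ b₂ Q₁₂ Q₂₁ Φ) (j k : Fin 2) :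
    HasDens b₁ b₂ (fun l => Φ l 1 j k - freeCol ![b₁, b₂] k j l 1) := by
  -- Borel measurable, globally integrable versions of `-i B Q`.
  set m₀ := hQ₁₂.aestronglyMeasurable.mk Q₁₂ with hm₀
  set m₁ := hQ₂₁.aestronglyMeasurable.mk Q₂₁ with hm₁
  have ae₀ : ∀ᵐ x ∂(volume.restrict (Icc (0:ℝ) 1)), Q₁₂ x = m₀ x :=
    hQ₁₂.aestronglyMeasurable.ae_eq_mk
  have ae₁ : ∀ᵐ x ∂(volume.restrict (Icc (0:ℝ) 1)), Q₂₁ x = m₁ x :=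
    hQ₂₁.aestronglyMeasurable.ae_eq_mk
  have mm₀ : Measurable m₀ := hQ₁₂.aestronglyMeasurable.stronglyMeasurable_mk.measurable
  have mm₁ : Measurable m₁ := hQ₂₁.aestronglyMeasurable.stronglyMeasurable_mk.measurable
  set q : Fin 2 → ℝ → ℂ := ![fun t => -(I * b₁) * (Icc (0:ℝ) 1).indicator m₀ t,
    fun t => -(I * b₂) * (Icc (0:ℝ) 1).indicator m₁ t] with hq
  have hqm : ∀ j, Measurable (q j) := by
    intro j; fin_cases j
    · exact (mm₀.indicator measurableSet_Icc).const_mul _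
    · exact (mm₁.indicator measurableSet_Icc).const_mul _
  have hqi : ∀ j, Integrable (q j) := by
    intro j; fin_cases j
    · exact ((integrable_indicator_iff measurableSet_Icc).2 (hQ₁₂.congr ae₀)).const_mul _
    · exact ((integrable_indicator_iff measurableSet_Icc).2 (hQ₂₁.congr ae₁)).const_mul _
  obtain ⟨G, hGi, hGs, hG⟩ := column_rep (b := ![b₁, b₂]) (q := q) (k := k) hb₁ hb₂ hqm hqi j
  refine ⟨G, hGi, hGs, fun l => ?_⟩
  obtain ⟨h0, hs⟩ := hΦ l
  obtain ⟨g₀, g₁, p₀, p₁, e⟩ := (hs k).exists_prim hb₁.ne hb₂.ne'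
  have key := hG l (fun j x => Φ l x j k) (by
    intro j; fin_cases j
    · exact p₀.continuousOn
    · exact p₁.continuousOn) (by
    intro j x hx
    fin_cases j
    · have := p₀.duhamel (c := I * b₁ * l) (h := fun t => q 0 t * Φ l t 1 k) (by
        filter_upwards [e, ae₀, ae_restrict_mem measurableSet_Icc] with t h1 h2 h3
        rw [h1.1, h2]
        simp only [hq, Matrix.cons_val_zero, indicator_of_mem h3]
        ring) hx
      rw [intervalIntegral.integral_of_le hx.1] at this
      refine this.trans ?_
      congr 1
      simp only [h0, freeCol, Fin.zero_eta]
      split_ifs with hk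
      · subst hk; simp
      · simp
    · have := p₁.duhamel (c := I * b₂ * l) (h := fun t => q 1 t * Φ l t 0 k) (by
        filter_upwards [e, ae₁, ae_restrict_mem measurableSet_Icc] with t h1 h2 h3
        rw [h1.2, h2]
        simp only [hq, Matrix.cons_val_one, Matrix.cons_val_fin_one, indicator_of_mem h3]
        ring) hx
      rw [intervalIntegral.integral_of_le hx.1] at this
      refine this.trans ?_
      congr 1
      simp only [h0, freeCol, Fin.mk_one]
      split_ifs with hk
      · subst hk; simp
      · simp)
  beta_reduce
  rw [key, add_sub_cancel_left]

/-- Representation of the characteristic determinant: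
`Δ(λ) = Δ₀(λ) + ∫₀¹ g₁(t) e^{i b₁ λ t} dt + ∫₀¹ g₂(t) e^{i b₂ λ t} dt` with `g₁, g₂ ∈ L¹[0,1]`. -/
theorem riesz_dirac_stmt14 (b₁ b₂ : ℝ) (hb₁ : b₁ < 0) (hb₂ : 0 < b₂)
    (Q₁₂ Q₂₁ : ℝ → ℂ)
    (hQ₁₂ : IntegrableOn Q₁₂ (Set.Icc (0:ℝ) 1))
    (hQ₂₁ : IntegrableOn Q₂₁ (Set.Icc (0:ℝ) 1))
    (Φ : ℂ → ℝ → Fin 2 → Fin 2 → ℂ)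
    (hΦ : IsFundSol b₁ b₂ Q₁₂ Q₂₁ Φ)
    (aM : Fin 2 → Fin 4 → ℂ) :
    ∃ g₁ g₂ : ℝ → ℂ,
      IntegrableOn g₁ (Set.Icc (0:ℝ) 1) ∧ IntegrableOn g₂ (Set.Icc (0:ℝ) 1) ∧
      ∀ l : ℂ, charDet aM Φ l = Delta0 b₁ b₂ aM l +
        (∫ t in Set.Icc (0:ℝ) 1, g₁ t * Complex.exp (Complex.I * (b₁:ℂ) * l * (t:ℂ))) +
        (∫ t in Set.Icc (0:ℝ) 1, g₂ t * Complex.exp (Complex.I * (b₂:ℂ) * l * (t:ℂ))) := by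
  have D := hasDens_fundSol hb₁ hb₂ hQ₁₂ hQ₂₁ hΦ
  have H := ((((D 0 1).const_mul (Jdet aM 0 2)).add ((D 1 1).const_mul (Jdet aM 0 3))).add
    ((D 0 0).const_mul (Jdet aM 2 1))).add ((D 1 0).const_mul (Jdet aM 3 1))
  obtain ⟨g₁, g₂, hg₁, hg₂, hg⟩ := H.split hb₁ hb₂
  refine ⟨g₁, g₂, hg₁, hg₂, fun l => ?_⟩
  rw [add_assoc, ← hg l]
  have hdet := det_fundSol hb₁.ne hb₂.ne' hΦ l
  obtain ⟨h0, -⟩ := hΦ l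
  simp only [charDet, bform, Delta0, Jdet, h0, freeCol, ← hdet]
  simp
  ring
end
end

section
/- Let h > 0 and let Λ = {λ_n}_{n∈ℤ} be an incondensable sequence lying in the strip Π_h = {λ ∈ ℂ : |Im λ| ≤ h}. Then there exist ε₀ > 0 and N₀ ∈ ℕ such that for every ε ∈ (0, ε₀), every connected component of the union ⋃_{n∈ℤ} D_ε(λ_n) of open discs of radius ε centered at the λ_n contains at most N₀ of the discs D_ε(λ_n), i.e. for each connected component C, the set {n ∈ ℤ : D_ε(λ_n) ⊆ C} has cardinality at most N₀. -/
/-!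
The projection of a connected component to the real axis is an interval covered by the intervals
of radius `ε` about the points `Re λ_n`. An interval of length `L / 2` meets at most `N` of these,
so it cannot be covered once `2 * N * ε < L / 2` (`not_Icc_subset_iUnion_ball`). Hence each
component has all its points within horizontal distance `L / 2` of any given one, and
incondensability bounds the number of centres it contains by `N`.
-/

open Metric Set Filter

noncomputable section

/-- The points `x n` within `L` of `a` are at most `N` in number, and only the intervals about
these can meet `[a, a + L / 2]`; their total length is too small to cover it. -/
theorem not_Icc_subset_iUnion_ball {x : ℤ → ℝ} {L ε a : ℝ} {N : ℕ} (hL : 0 < L)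
    (hfin : {n : ℤ | |x n - a| ≤ L}.Finite) (hcard : {n : ℤ | |x n - a| ≤ L}.ncard ≤ N)
    (hε : 0 < ε) (hεL : ε < L / (4 * (N + 1))) :
    ¬ Icc a (a + L / 2) ⊆ ⋃ n : ℤ, ball (x n) ε := by
  intro hsub
  have hεN : ε * (4 * (N + 1)) < L := (lt_div_iff₀ (by positivity)).1 hεL
  have hN : (0 : ℝ) ≤ N := N.cast_nonneg
  have hcov : Icc a (a + L / 2) ⊆ ⋃ n ∈ hfin.toFinset, ball (x n) ε := by
    intro y hy
    obtain ⟨n, hn⟩ := mem_iUnion.1 (hsub hy)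
    refine mem_iUnion₂.2 ⟨n, ?_, hn⟩
    rw [Finite.mem_toFinset, mem_setOf_eq, abs_le]
    rw [mem_ball, Real.dist_eq, abs_lt] at hn
    constructor <;> nlinarith [hy.1, hy.2, hn.1, hn.2]
  have hvol := (MeasureTheory.measure_mono (μ := MeasureTheory.volume) hcov).trans
    (MeasureTheory.measure_biUnion_finset_le _ _)
  simp only [Real.volume_Icc, Real.volume_ball, Finset.sum_const, nsmul_eq_mul] at hvol
  rw [← ENNReal.ofReal_natCast, ← ENNReal.ofReal_mul (by positivity),
    ENNReal.ofReal_le_ofReal_iff (by positivity),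
    ← ncard_eq_toFinset_card _ hfin] at hvol
  have hc : (({n : ℤ | |x n - a| ≤ L}.ncard : ℕ) : ℝ) ≤ N := by exact_mod_cast hcard
  nlinarith

/-- An incondensable sequence `Λ = {λ_n}` lying in a horizontal strip
`Π_h` admits `ε₀ > 0` and `N₀ ∈ ℕ` such that for every `ε ∈ (0,ε₀)`, every connected
component of `⋃_n D_ε(λ_n)` contains at most `N₀` of the discs `D_ε(λ_n)`. -/
theorem riesz_dirac_stmt15 (h : ℝ) (hh : 0 < h) (lam : ℤ → ℂ)
    (hstrip : ∀ n : ℤ, |(lam n).im| ≤ h)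
    (hincond : ∃ L : ℝ, 0 < L ∧ ∃ N : ℕ, ∀ t : ℝ,
      ({n : ℤ | |(lam n).re - t| ≤ L}).Finite ∧
      ({n : ℤ | |(lam n).re - t| ≤ L}).ncard ≤ N) :
    ∃ ε₀ : ℝ, 0 < ε₀ ∧ ∃ N₀ : ℕ, ∀ ε : ℝ, 0 < ε → ε < ε₀ →
      ∀ z ∈ ⋃ n : ℤ, ball (lam n) ε,
        ({n : ℤ | ball (lam n) ε ⊆
            connectedComponentIn (⋃ m : ℤ, ball (lam m) ε) z}).Finite ∧
        ({n : ℤ | ball (lam n) ε ⊆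
            connectedComponentIn (⋃ m : ℤ, ball (lam m) ε) z}).ncard ≤ N₀ := by
  obtain ⟨L, hL, N, hN⟩ := hincond
  refine ⟨L / (4 * (N + 1)), by positivity, N, fun ε hε hεL z hz => ?_⟩
  set U := ⋃ m : ℤ, ball (lam m) ε with hU
  have hconn : (Complex.re '' connectedComponentIn U z).OrdConnected :=
    (isPreconnected_connectedComponentIn.image _ Complex.continuous_re.continuousOn).ordConnected
  have hcov : Complex.re '' connectedComponentIn U z ⊆ ⋃ n : ℤ, ball (lam n).re ε := by
    rintro _ ⟨w, hw, rfl⟩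
    obtain ⟨n, hn⟩ := mem_iUnion.1 (connectedComponentIn_subset U z hw)
    refine mem_iUnion.2 ⟨n, ?_⟩
    rw [mem_ball, Real.dist_eq, ← Complex.sub_re]
    rw [mem_ball, Complex.dist_eq] at hn
    exact (Complex.abs_re_le_norm _).trans_lt hn
  have hno (a : ℝ) : ¬ Icc a (a + L / 2) ⊆ Complex.re '' connectedComponentIn U z := fun hs =>
    not_Icc_subset_iUnion_ball hL (hN a).1 (hN a).2 hε hεL (hs.trans hcov)
  have hzC : z.re ∈ Complex.re '' connectedComponentIn U z :=
    mem_image_of_mem _ (mem_connectedComponentIn hz)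
  have hsub : {n : ℤ | ball (lam n) ε ⊆ connectedComponentIn U z} ⊆
      {n : ℤ | |(lam n).re - z.re| ≤ L} := by
    intro n hn
    have hnC : (lam n).re ∈ Complex.re '' connectedComponentIn U z :=
      mem_image_of_mem _ (hn (mem_ball_self hε))
    by_contra hfar
    rw [mem_setOf_eq, not_le, lt_abs] at hfar
    rcases hfar with hfar | hfar
    · exact hno z.re ((Icc_subset_Icc_right (by linarith)).trans (hconn.out hzC hnC))
    · exact hno (lam n).re ((Icc_subset_Icc_right (by linarith)).trans (hconn.out hnC hzC))
  exact ⟨(hN z.re).1.subset hsub, (ncard_le_ncard hsub (hN z.re).1).trans (hN z.re).2⟩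
end
end
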